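/- arXiv:2204.10317 — 4 statements merged into one kernel-verified Lean document; each statement's English description precedes it below -/
import Mathlib

section
/- For every simplicial complex X on a finite vertex set V, v(X) = min { |A| : A ∈ X and U_X(A) is a facet of X }, where U_X(A) := A ∪ {v ∈ V∖A : A∪{v} ∈ X}. -/
/-!
The set `U_X(A)` is the complement of the neighbor set `N(A)`. Complementation reverses inclusion
and turns vertex covers into faces, hence minimal vertex covers into facets: `N(A)` is a minimal
vertex cover exactly when `U_X(A)` is a facet, so both minima run over the same faces `A`.
-/

open scoped Classical

/-- `F` is a facet (inclusion-maximal face) of the complex `X`. -/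
def IsFacet {V : Type*} (X : Set (Finset V)) (F : Finset V) : Prop :=
  F ∈ X ∧ ∀ G ∈ X, F ⊆ G → G = F

/-- The neighbors of a face `A` in the clutter of circuits of `X`:
the vertices `w ∉ A` with `A ∪ {w} ∉ X`. -/
noncomputable def nbrs {V : Type*} [Fintype V] [DecidableEq V]
    (X : Set (Finset V)) (A : Finset V) : Finset V :=
  Finset.univ.filter (fun w => w ∉ A ∧ insert w A ∉ X)

/-- `W` is a vertex cover of the clutter of circuits of `X`: its complement
is a face of `X` (an independent set). -/
def IsVertexCover {V : Type*} [Fintype V] [DecidableEq V]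
    (X : Set (Finset V)) (W : Finset V) : Prop :=
  Finset.univ \ W ∈ X

/-- `W` is a minimal vertex cover. -/
def IsMinVertexCover {V : Type*} [Fintype V] [DecidableEq V]
    (X : Set (Finset V)) (W : Finset V) : Prop :=
  IsVertexCover X W ∧ ∀ W' ⊂ W, ¬ IsVertexCover X W'

/-- The v-number of a simplicial complex `X`: the minimum cardinality of a
face `A ∈ X` whose neighbor set is a minimal vertex cover. -/
noncomputable def vNumber {V : Type*} [Fintype V] [DecidableEq V]
    (X : Set (Finset V)) : ℕ :=
  sInf {n : ℕ | ∃ A ∈ X, IsMinVertexCover X (nbrs X A) ∧ A.card = n}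

/-- `U_X(A) = A ∪ {v ∈ V \ A : A ∪ {v} ∈ X}`. -/
noncomputable def UX {V : Type*} [Fintype V] [DecidableEq V]
    (X : Set (Finset V)) (A : Finset V) : Finset V :=
  A ∪ Finset.univ.filter (fun v => v ∉ A ∧ insert v A ∈ X)

theorem minimal_compl_iff_maximal {α : Type*} [BooleanAlgebra α] {P : α → Prop} {a : α} :
    Minimal (fun b => P bᶜ) a ↔ Maximal P aᶜ := by
  constructor
  · rintro ⟨ha, hmin⟩
    refine ⟨ha, fun c hc hac => ?_⟩
    exact le_compl_comm.mp (hmin (by simpa only [compl_compl] using hc) (compl_le_of_compl_le hac))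
  · rintro ⟨ha, hmax⟩
    exact ⟨ha, fun b hb hba => compl_le_compl_iff_le.mp (hmax hb (compl_le_compl hba))⟩

theorem isFacet_iff_maximal {V : Type*} {X : Set (Finset V)} {F : Finset V} :
    IsFacet X F ↔ Maximal (· ∈ X) F := by
  simp only [IsFacet, maximal_iff, eq_comm (a := F)]

section Finite

variable {V : Type*} [Fintype V] [DecidableEq V]

theorem isVertexCover_iff_compl_mem {X : Set (Finset V)} {W : Finset V} :
    IsVertexCover X W ↔ Wᶜ ∈ X := by
  rw [IsVertexCover, Finset.compl_eq_univ_sdiff]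

theorem isMinVertexCover_iff_minimal {X : Set (Finset V)} {W : Finset V} :
    IsMinVertexCover X W ↔ Minimal (IsVertexCover X) W := by
  simp only [IsMinVertexCover, minimal_iff_forall_lt]

theorem isMinVertexCover_iff_isFacet_compl {X : Set (Finset V)} {W : Finset V} :
    IsMinVertexCover X W ↔ IsFacet X Wᶜ :=
  calc
    IsMinVertexCover X W ↔ Minimal (fun W' => W'ᶜ ∈ X) W := by
      simp only [isMinVertexCover_iff_minimal, ← isVertexCover_iff_compl_mem]
    _ ↔ Maximal (· ∈ X) Wᶜ := minimal_compl_iff_maximal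
    _ ↔ IsFacet X Wᶜ := isFacet_iff_maximal.symm

theorem compl_nbrs (X : Set (Finset V)) (A : Finset V) : (nbrs X A)ᶜ = UX X A := by
  ext v
  simp only [nbrs, UX, Finset.mem_compl, Finset.mem_union, Finset.mem_filter, Finset.mem_univ,
    true_and]
  tauto

theorem isMinVertexCover_nbrs_iff_isFacet_UX {X : Set (Finset V)} {A : Finset V} :
    IsMinVertexCover X (nbrs X A) ↔ IsFacet X (UX X A) := by
  rw [isMinVertexCover_iff_isFacet_compl, compl_nbrs]

theorem vNumber_eq_min_card_UX_facet_general (X : Set (Finset V)) :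
    vNumber X = sInf {n : ℕ | ∃ A ∈ X, IsFacet X (UX X A) ∧ A.card = n} := by
  simp only [vNumber, isMinVertexCover_nbrs_iff_isFacet_UX]

end Finite

/-- For every simplicial complex `X` on a finite vertex set `V`,
`v(X) = min { |A| : A ∈ X and U_X(A) is a facet of X }`. -/
theorem vNumber_eq_min_card_UX_facet {V : Type*} [Fintype V] [DecidableEq V]
    (X : Set (Finset V))
    (hdown : ∀ s ∈ X, ∀ t ⊆ s, t ∈ X)
    (hvert : ∀ x : V, ({x} : Finset V) ∈ X) :
    vNumber X = sInf {n : ℕ | ∃ A ∈ X, IsFacet X (UX X A) ∧ A.card = n} :=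
  vNumber_eq_min_card_UX_facet_general X
end

section
/- Let X be a simplicial complex on a finite vertex set V and let A ∈ X be a face such that the link lk(X;A) is a simplex (i.e., the union of all faces of lk(X;A) is itself a face of lk(X;A)). Then U_X(A) := A ∪ {v ∈ V∖A : A∪{v} ∈ X} is a facet of X. -/
open scoped Classical

/-- The link of a face `A` in `X`. -/
def link {V : Type*} [DecidableEq V] (X : Set (Finset V)) (A : Finset V) :
    Set (Finset V) :=
  {T : Finset V | T ∈ X ∧ A ∩ T = ∅ ∧ T ∪ A ∈ X}

/-- A family `Y` of finite sets is a simplex if the union of all its members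
is itself a member. -/
def IsSimplex {V : Type*} [Fintype V] (Y : Set (Finset V)) : Prop :=
  Finset.univ.filter (fun v => ∃ T ∈ Y, v ∈ T) ∈ Y

/-!
The vertices of the link of `A` are exactly the `v ∉ A` with `A ∪ {v} ∈ X`, so `U_X(A)` is `A`
together with all vertices of the link; hence the link is a simplex iff `U_X(A)` is a face. Any face
containing `A` is contained in `U_X(A)`, so `U_X(A)` is maximal as soon as it is a face.
-/

section SimplicialComplex

variable {V : Type*} [DecidableEq V] {X : Set (Finset V)} {A : Finset V} {v : V}

theorem singleton_mem_link_iff (hX : IsLowerSet X) :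
    {v} ∈ link X A ↔ v ∉ A ∧ insert v A ∈ X := by
  have singleton_mem (h : insert v A ∈ X) : {v} ∈ X :=
    hX (Finset.singleton_subset_iff.2 (Finset.mem_insert_self v A)) h
  simp only [link, Set.mem_ofPred_eq, ← Finset.disjoint_iff_inter_eq_empty,
    Finset.disjoint_singleton_right, ← Finset.insert_eq]
  exact and_iff_right_of_imp fun h => singleton_mem h.2

theorem isLowerSet_link (hX : IsLowerSet X) : IsLowerSet (link X A) := by
  rintro T S hST ⟨hT, hAT, hTA⟩
  refine ⟨hX hST hT, ?_, hX (Finset.union_subset_union_left hST) hTA⟩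
  exact Finset.subset_empty.1 (hAT ▸ Finset.inter_subset_inter_left hST)

theorem exists_mem_link_iff (hX : IsLowerSet X) :
    (∃ T ∈ link X A, v ∈ T) ↔ v ∉ A ∧ insert v A ∈ X := by
  rw [← singleton_mem_link_iff hX]
  constructor
  · rintro ⟨T, hT, hvT⟩
    exact isLowerSet_link hX (Finset.singleton_subset_iff.2 hvT) hT
  · exact fun h => ⟨{v}, h, Finset.mem_singleton_self v⟩

variable [Fintype V]

theorem subset_UX : A ⊆ UX X A :=
  Finset.subset_union_left

theorem subset_UX_of_mem (hX : IsLowerSet X) {G : Finset V} (hG : G ∈ X) (hAG : A ⊆ G) :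
    G ⊆ UX X A := by
  intro v hv
  by_cases hvA : v ∈ A
  · exact subset_UX hvA
  · have insert_mem : insert v A ∈ X := hX (Finset.insert_subset hv hAG) hG
    exact Finset.mem_union_right A (by simp [hvA, insert_mem])

theorem isFacet_UX_iff_mem (hX : IsLowerSet X) : IsFacet X (UX X A) ↔ UX X A ∈ X := by
  refine ⟨And.left, fun h => ⟨h, fun G hG hUG => ?_⟩⟩
  exact (subset_UX_of_mem hX hG (subset_UX.trans hUG)).antisymm hUG

theorem isSimplex_link_iff_UX_mem (hX : IsLowerSet X) : IsSimplex (link X A) ↔ UX X A ∈ X := by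
  simp only [IsSimplex, exists_mem_link_iff hX]
  set W : Finset V := {v | v ∉ A ∧ insert v A ∈ X}
  have inter_eq_empty : A ∩ W = ∅ := by
    ext v
    simp +contextual [W]
  have union_eq : W ∪ A = UX X A := by
    rw [Finset.union_comm, UX]
  rw [← union_eq]
  exact ⟨fun h => h.2.2, fun h => ⟨hX Finset.subset_union_left h, inter_eq_empty, h⟩⟩

end SimplicialComplex

/-- If `X` is a simplicial complex on a finite vertex set `V`
and `A ∈ X` is a face whose link is a simplex, then `U_X(A)` is a facet
of `X`. -/
theorem UX_isFacet_of_link_simplex {V : Type*} [Fintype V] [DecidableEq V]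
    (X : Set (Finset V))
    (hdown : ∀ s ∈ X, ∀ t ⊆ s, t ∈ X)
    (hvert : ∀ x : V, ({x} : Finset V) ∈ X)
    (A : Finset V) (hA : A ∈ X)
    (hlink : IsSimplex (link X A)) :
    IsFacet X (UX X A) := by
  have hX : IsLowerSet X := fun _ _ hts hs => hdown _ hs _ hts
  exact (isFacet_UX_iff_mem hX).2 ((isSimplex_link_iff_UX_mem hX).1 hlink)
end

section
/- For every simplicial complex X on a finite vertex set V, v(X) ≤ β(X), where β(X) is the maximum cardinality of a face A that is minimal under inclusion with the property that lk(X;A) is a simplex. -/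
open scoped Classical

/-- `β(X)`: the maximum cardinality of a face `A` which is minimal (under
inclusion) with the property that `lk(X;A)` is a simplex. -/
noncomputable def betaNumber {V : Type*} [Fintype V] [DecidableEq V]
    (X : Set (Finset V)) : ℕ :=
  sSup {n : ℕ | ∃ A : Finset V,
    (A ∈ X ∧ IsSimplex (link X A) ∧ ∀ B ⊂ A, ¬ IsSimplex (link X B)) ∧ A.card = n}

/-!
The vertices of `lk(X;A)` are exactly those lying neither in `A` nor in `N(A)`. Hence `lk(X;A)` is a
simplex iff `N(A)` is a vertex cover, and such a cover is automatically minimal: leaving some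
`w ∈ N(A)` uncovered would force `A ∪ {w}` to be a face. So `v(X)` is the least size of a face with
simplex link, while `β(X)` is the largest size of an inclusion-minimal one.
-/

theorem isSimplex_iff_mem_of_forall_mem_iff {V : Type*} [Fintype V] {Y : Set (Finset V)}
    {S : Finset V} (hS : ∀ v, v ∈ S ↔ ∃ T ∈ Y, v ∈ T) : IsSimplex Y ↔ S ∈ Y := by
  have hfilter : Finset.univ.filter (fun v ↦ ∃ T ∈ Y, v ∈ T) = S := by
    ext v
    rw [Finset.mem_filter_univ, hS]
  rw [IsSimplex, hfilter]

section LowerSet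

variable {V : Type*} [DecidableEq V] {X : Set (Finset V)} {A : Finset V}

theorem exists_mem_link_mem_iff (hX : IsLowerSet X) {v : V} :
    (∃ T ∈ link X A, v ∈ T) ↔ v ∉ A ∧ insert v A ∈ X := by
  constructor
  · rintro ⟨T, ⟨-, hdisj, hunion⟩, hvT⟩
    have hvA : v ∉ A := fun hvA ↦
      Finset.notMem_empty v (hdisj ▸ Finset.mem_inter.mpr ⟨hvA, hvT⟩)
    exact ⟨hvA, hX (Finset.insert_subset (Finset.mem_union_left A hvT) Finset.subset_union_right)
      hunion⟩
  · rintro ⟨hvA, hinsert⟩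
    have hv : {v} ∈ X := hX (Finset.singleton_subset_iff.mpr (Finset.mem_insert_self v A)) hinsert
    exact ⟨{v}, ⟨hv, Finset.inter_singleton_of_notMem hvA, hinsert⟩, Finset.mem_singleton_self v⟩

variable [Fintype V]

theorem mem_univ_sdiff_nbrs_sdiff_iff (hX : IsLowerSet X) {v : V} :
    v ∈ (Finset.univ \ nbrs X A) \ A ↔ ∃ T ∈ link X A, v ∈ T := by
  simp only [exists_mem_link_mem_iff hX, nbrs, Finset.mem_filter, Finset.mem_sdiff,
    Finset.mem_univ, true_and]
  tauto

theorem subset_univ_sdiff_nbrs : A ⊆ Finset.univ \ nbrs X A :=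
  fun v hv ↦ Finset.mem_sdiff.mpr
    ⟨Finset.mem_univ v, fun hvN ↦ (Finset.mem_filter.mp hvN).2.1 hv⟩

theorem isSimplex_link_iff_isVertexCover_nbrs (hX : IsLowerSet X) :
    IsSimplex (link X A) ↔ IsVertexCover X (nbrs X A) := by
  have hunion : (Finset.univ \ nbrs X A) \ A ∪ A = Finset.univ \ nbrs X A :=
    Finset.sdiff_union_of_subset subset_univ_sdiff_nbrs
  rw [isSimplex_iff_mem_of_forall_mem_iff fun _ ↦ mem_univ_sdiff_nbrs_sdiff_iff hX]
  constructor
  · rintro ⟨-, -, hface⟩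
    rwa [hunion] at hface
  · intro hcover
    exact ⟨hX Finset.sdiff_subset hcover, Finset.inter_sdiff_self A _, hunion.symm ▸ hcover⟩

theorem not_isVertexCover_of_ssubset_nbrs (hX : IsLowerSet X) {W : Finset V}
    (hW : W ⊂ nbrs X A) : ¬ IsVertexCover X W := by
  obtain ⟨w, hw, hwW⟩ := Finset.exists_of_ssubset hW
  have hinsert : insert w A ⊆ Finset.univ \ W :=
    Finset.insert_subset (Finset.mem_sdiff.mpr ⟨Finset.mem_univ w, hwW⟩)
      (subset_univ_sdiff_nbrs.trans (Finset.sdiff_subset_sdiff subset_rfl hW.subset))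
  exact fun hcover ↦ (Finset.mem_filter.mp hw).2.2 (hX hinsert hcover)

theorem isMinVertexCover_nbrs_iff_isSimplex_link (hX : IsLowerSet X) :
    IsMinVertexCover X (nbrs X A) ↔ IsSimplex (link X A) := by
  rw [isSimplex_link_iff_isVertexCover_nbrs hX]
  exact and_iff_left fun _ ↦ not_isVertexCover_of_ssubset_nbrs hX

theorem mem_of_isSimplex_link (hX : IsLowerSet X) (hA : IsSimplex (link X A)) : A ∈ X :=
  hX Finset.subset_union_right hA.2.2

theorem univ_sdiff_nbrs_of_maximal (hA : Maximal (· ∈ X) A) : Finset.univ \ nbrs X A = A := by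
  refine Finset.Subset.antisymm (fun w hw ↦ ?_) subset_univ_sdiff_nbrs
  by_contra hwA
  have hinsert : insert w A ∉ X := fun h ↦
    hwA (hA.le_of_ge h (Finset.subset_insert w A) (Finset.mem_insert_self w A))
  exact (Finset.mem_sdiff.mp hw).2 (Finset.mem_filter.mpr ⟨Finset.mem_univ w, hwA, hinsert⟩)

theorem isSimplex_link_of_maximal (hX : IsLowerSet X) (hA : Maximal (· ∈ X) A) :
    IsSimplex (link X A) := by
  rw [isSimplex_link_iff_isVertexCover_nbrs hX, IsVertexCover, univ_sdiff_nbrs_of_maximal hA]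
  exact hA.prop

theorem vNumber_le_card_of_isSimplex_link (hX : IsLowerSet X) (hA : IsSimplex (link X A)) :
    vNumber X ≤ A.card :=
  Nat.sInf_le ⟨A, mem_of_isSimplex_link hX hA,
    (isMinVertexCover_nbrs_iff_isSimplex_link hX).mpr hA, rfl⟩

theorem card_le_betaNumber_of_minimal (hX : IsLowerSet X)
    (hA : Minimal (fun B ↦ IsSimplex (link X B)) A) : A.card ≤ betaNumber X := by
  refine le_csSup ⟨Fintype.card V, ?_⟩
    ⟨A, ⟨mem_of_isSimplex_link hX hA.prop, hA.prop, fun _ ↦ hA.not_prop_of_lt⟩, rfl⟩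
  rintro _ ⟨B, -, rfl⟩
  exact B.card_le_univ

theorem vNumber_le_betaNumber_general (hX : IsLowerSet X) (hne : X.Nonempty) :
    vNumber X ≤ betaNumber X := by
  obtain ⟨F, hF⟩ := X.toFinite.exists_maximal hne
  obtain ⟨A, hA⟩ := (Set.toFinite {B | IsSimplex (link X B)}).exists_minimal
    ⟨F, isSimplex_link_of_maximal hX hF⟩
  calc
    vNumber X ≤ A.card := vNumber_le_card_of_isSimplex_link hX hA.prop
    _ ≤ betaNumber X := card_le_betaNumber_of_minimal hX hA

end LowerSet

/-- For every simplicial complex `X` on a finite vertex set `V`,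
`v(X) ≤ β(X)`. -/
theorem vNumber_le_betaNumber {V : Type*} [Fintype V] [DecidableEq V]
    (X : Set (Finset V))
    (hdown : ∀ s ∈ X, ∀ t ⊆ s, t ∈ X)
    (hvert : ∀ x : V, ({x} : Finset V) ∈ X) :
    vNumber X ≤ betaNumber X := by
  obtain rfl | hne := X.eq_empty_or_nonempty
  · simp [vNumber]
  · exact vNumber_le_betaNumber_general (fun s t hts hs ↦ hdown s hs t hts) hne
end

section
/- For every finite simple graph G (with at least one edge), β_ve(G) = β(Ind(G)), where Ind(G) is the independence complex of G and β(X) is the maximum cardinality of a face A of X that is minimal under inclusion with the property that lk(X;A) is a simplex. -/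
open scoped Classical

/-- `S` is an independent set of the graph `G`. -/
def IsIndepSet {V : Type*} (G : SimpleGraph V) (S : Set V) : Prop :=
  ∀ x ∈ S, ∀ y ∈ S, ¬ G.Adj x y

/-- `u` vertex-wise dominates the edge `xy`: `u ∈ N_G[x] ∪ N_G[y]`. -/
def VeDominates {V : Type*} (G : SimpleGraph V) (u x y : V) : Prop :=
  u = x ∨ u = y ∨ G.Adj u x ∨ G.Adj u y

/-- `S` is a vertex-wise dominating set of `G`. -/
def IsVeDomSet {V : Type*} (G : SimpleGraph V) (S : Set V) : Prop :=
  ∀ x y : V, G.Adj x y → ∃ s ∈ S, VeDominates G s x y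

/-- The upper independent vertex-wise domination number `β_ve(G)`. -/
noncomputable def betaVe {V : Type*} [Fintype V] [DecidableEq V]
    (G : SimpleGraph V) : ℕ :=
  sSup {n : ℕ | ∃ S : Finset V,
    IsIndepSet G ↑S ∧ IsVeDomSet G ↑S ∧ (∀ T ⊂ S, ¬ IsVeDomSet G ↑T) ∧ S.card = n}

/-- The independence complex of `G`: the faces are the (finite) independent
sets of `G`. -/
def indComplex {V : Type*} (G : SimpleGraph V) : Set (Finset V) :=
  {A : Finset V | IsIndepSet G ↑A}

/-!
The link of an independent set `A` in `Ind(G)` is the independence complex of the graph induced on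
`V ∖ N_G[A]`. An independence complex is a simplex exactly when its graph has no edge, and the edges
not ve-dominated by `A` are exactly those with both ends in `V ∖ N_G[A]`. Hence `lk(Ind(G); A)` is a
simplex iff `A` is ve-dominating. Subsets of independent sets are independent, so the two minimality
conditions agree as well.
-/

/-- The set `V ∖ N_G[S]` of vertices not dominated by `S`. For independent `S` it is the vertex set
of the link of `S` in `Ind(G)`. -/
def undominatedSet {V : Type*} (G : SimpleGraph V) (S : Set V) : Set V :=
  {v | v ∉ S ∧ ∀ s ∈ S, ¬ G.Adj s v}

section

variable {V : Type*} {G : SimpleGraph V}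

theorem IsIndepSet.mono {S T : Set V} (hT : IsIndepSet G T) (hST : S ⊆ T) : IsIndepSet G S :=
  fun x hx y hy => hT x (hST hx) y (hST hy)

theorem isIndepSet_singleton (v : V) : IsIndepSet G {v} := by
  rintro x rfl y rfl
  exact G.irrefl

theorem isIndepSet_union {S T : Set V} :
    IsIndepSet G (S ∪ T) ↔
      IsIndepSet G S ∧ IsIndepSet G T ∧ ∀ s ∈ S, ∀ t ∈ T, ¬ G.Adj s t := by
  constructor
  · exact fun h => ⟨h.mono Set.subset_union_left, h.mono Set.subset_union_right,
      fun s hs t ht => h s (.inl hs) t (.inr ht)⟩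
  · rintro ⟨hS, hT, hST⟩ x (hx | hx) y (hy | hy)
    · exact hS x hx y hy
    · exact hST x hx y hy
    · exact fun hxy => hST y hy x hx hxy.symm
    · exact hT x hx y hy

theorem isVeDomSet_iff_isIndepSet_undominatedSet {S : Set V} :
    IsVeDomSet G S ↔ IsIndepSet G (undominatedSet G S) := by
  constructor
  · rintro hS x ⟨hxS, hx⟩ y ⟨hyS, hy⟩ hxy
    obtain ⟨s, hs, rfl | rfl | hsx | hsy⟩ := hS x y hxy
    · exact hxS hs
    · exact hyS hs
    · exact hx s hs hsx
    · exact hy s hs hsy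
  · intro hS x y hxy
    by_contra! hundom
    simp only [VeDominates, not_or] at hundom
    have hx : x ∈ undominatedSet G S :=
      ⟨fun hxS => (hundom x hxS).1 rfl, fun s hs => (hundom s hs).2.2.1⟩
    have hy : y ∈ undominatedSet G S :=
      ⟨fun hyS => (hundom y hyS).2.1 rfl, fun s hs => (hundom s hs).2.2.2⟩
    exact hS x hx y hy hxy

variable [DecidableEq V] {A : Finset V}

theorem mem_link_indComplex_iff (hA : IsIndepSet G ↑A) {T : Finset V} :
    T ∈ link (indComplex G) A ↔ IsIndepSet G ↑T ∧ ↑T ⊆ undominatedSet G ↑A := by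
  simp only [link, indComplex, Set.mem_ofPred_eq, Finset.coe_union, isIndepSet_union,
    ← Finset.disjoint_iff_inter_eq_empty]
  constructor
  · rintro ⟨hT, hdisj, -, -, hTA⟩
    exact ⟨hT, fun t ht => ⟨Finset.disjoint_right.1 hdisj ht,
      fun a ha hat => hTA t ht a ha hat.symm⟩⟩
  · rintro ⟨hT, hTA⟩
    exact ⟨hT, Finset.disjoint_right.2 fun t ht => (hTA ht).1, hT, hA,
      fun t ht a ha hta => (hTA ht).2 a ha hta.symm⟩

theorem exists_mem_link_indComplex_iff (hA : IsIndepSet G ↑A) {v : V} :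
    (∃ T ∈ link (indComplex G) A, v ∈ T) ↔ v ∈ undominatedSet G ↑A := by
  simp only [mem_link_indComplex_iff hA]
  constructor
  · rintro ⟨T, ⟨-, hTA⟩, hv⟩
    exact hTA hv
  · intro hv
    refine ⟨{v}, ?_, Finset.mem_singleton_self v⟩
    rw [Finset.coe_singleton]
    exact ⟨isIndepSet_singleton v, Set.singleton_subset_iff.2 hv⟩

variable [Fintype V]

theorem isSimplex_link_indComplex_iff (hA : IsIndepSet G ↑A) :
    IsSimplex (link (indComplex G) A) ↔ IsVeDomSet G ↑A := by
  simp only [IsSimplex, exists_mem_link_indComplex_iff hA]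
  rw [mem_link_indComplex_iff hA, Finset.coe_filter_univ, Set.ofPred_mem_eq,
    and_iff_left subset_rfl, isVeDomSet_iff_isIndepSet_undominatedSet]

theorem minimal_isSimplex_link_indComplex_iff :
    (A ∈ indComplex G ∧ IsSimplex (link (indComplex G) A) ∧
        ∀ B ⊂ A, ¬ IsSimplex (link (indComplex G) B)) ↔
      IsIndepSet G ↑A ∧ IsVeDomSet G ↑A ∧ ∀ B ⊂ A, ¬ IsVeDomSet G ↑B :=
  and_congr_right fun hA => and_congr (isSimplex_link_indComplex_iff hA) <|
    forall₂_congr fun _ hBA => not_congr <|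
      isSimplex_link_indComplex_iff <| hA.mono <| Finset.coe_subset.2 hBA.subset

end

/-- For every finite simple graph `G` with at least one edge,
`β_ve(G) = β(Ind(G))`. -/
theorem betaVe_eq_betaNumber_indComplex {V : Type*} [Fintype V] [DecidableEq V]
    (G : SimpleGraph V) (hedge : ∃ x y : V, G.Adj x y) :
    betaVe G = betaNumber (indComplex G) := by
  simp only [betaVe, betaNumber, minimal_isSimplex_link_indComplex_iff, and_assoc]
end
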